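/- (Key convergence inequality.) Let ε ∈ (0,1), let (p^ε,q^ε) ∈ G × A be the solution of the AP formulation, let φ^ε := p^ε + q^ε, and let φ⁰ ∈ G be the unique solution of the Limit problem (L). Then (1/(2ε)) a∥(φ^ε − φ⁰, φ^ε − φ⁰) + a⊥(φ^ε − φ⁰, φ^ε − φ⁰) ≤ ε (C_W² F₀²)/2 − a⊥(φ⁰, q^ε). -/

import Mathlib

/-!
Write `r = p - φ₀`, so that the error is `e = r + q`. A null vector of the positive semidefinite form
`apar` lies in its radical, so `r` is a null vector too and `apar e e = apar q q`. Testing the first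
AP equation and the limit problem with `r` gives `aperp e r = 0`; testing the second AP equation
with `q` gives `aperp e q = ell q - apar q q / ε - aperp φ₀ q`. Hence the left-hand side equals
`ell q - apar q q / (2 ε) - aperp φ₀ q`, and the Poincaré–Wirtinger inequality together with
Young's inequality bounds `ell q` by `ε CW² F₀² / 2 + apar q q / (2 ε)`.
-/

/-- A continuous, symmetric, positive semidefinite bilinear form on a real
inner-product space. -/
def IsCSPForm {V : Type*} [NormedAddCommGroup V] [InnerProductSpace ℝ V]
    (a : V →ₗ[ℝ] V →ₗ[ℝ] ℝ) : Prop :=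
  (∀ x y : V, a x y = a y x) ∧ (∀ x : V, 0 ≤ a x x) ∧
    (∃ C : ℝ, ∀ x y : V, |a x y| ≤ C * ‖x‖ * ‖y‖)

/-- Null vectors of a symmetric positive semidefinite form lie in its radical. -/
lemma IsCSPForm.apply_eq_zero {V : Type*} [NormedAddCommGroup V] [InnerProductSpace ℝ V]
    {a : V →ₗ[ℝ] V →ₗ[ℝ] ℝ} (ha : IsCSPForm a) {x : V} (hx : a x x = 0) (y : V) :
    a x y = 0 := by
  by_contra h
  -- `a (y + t x) (y + t x) = a y y + 2 t (a x y)` is affine in `t`; this `t` makes it `-1`.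
  have h1 := ha.2.1 (y + (-(a y y + 1) / (2 * a x y)) • x)
  simp only [map_add, map_smul, LinearMap.add_apply, LinearMap.smul_apply, smul_eq_mul, hx,
    ha.1 y x] at h1
  have h2 : -(a y y + 1) / (2 * a x y) * a x y = -(a y y + 1) / 2 := by
    field_simp
  linarith

/-- key convergence inequality:
(1/(2ε)) a∥(φ^ε−φ⁰,φ^ε−φ⁰) + a⊥(φ^ε−φ⁰,φ^ε−φ⁰) ≤ ε C_W² F₀²/2 − a⊥(φ⁰,q^ε),
where φ^ε = p^ε + q^ε. -/
theorem key_convergence_inequality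
    {V : Type*} [NormedAddCommGroup V] [InnerProductSpace ℝ V] [CompleteSpace V]
    (apar aperp c : V →ₗ[ℝ] V →ₗ[ℝ] ℝ)
    (hapar : IsCSPForm apar) (haperp : IsCSPForm aperp) (hc : IsCSPForm c)
    (α : ℝ) (hα : 0 < α)
    (hcoer : ∀ φ : V, α * ‖φ‖ ^ 2 ≤ apar φ φ + aperp φ φ)
    -- Hypothesis B: bounded projection P onto G along A, V = G ⊕ A
    (P : V →L[ℝ] V)
    (hPG : ∀ φ : V, apar (P φ) (P φ) = 0)
    (hPA : ∀ φ : V, ∀ ψ : V, apar ψ ψ = 0 → c (φ - P φ) ψ = 0)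
    (hPid : ∀ φ : V, apar φ φ = 0 → P φ = φ)
    (hPzero : ∀ φ : V, (∀ ψ : V, apar ψ ψ = 0 → c φ ψ = 0) → P φ = 0)
    -- Poincaré–Wirtinger inequality on A
    (CW : ℝ) (hCW : 0 < CW)
    (hPW : ∀ q : V, (∀ ψ : V, apar ψ ψ = 0 → c q ψ = 0) →
      c q q ≤ CW ^ 2 * apar q q)
    (ell : V →L[ℝ] ℝ) (F₀ : ℝ) (hF₀ : 0 ≤ F₀)
    (hell : ∀ ψ : V, |ell ψ| ≤ F₀ * Real.sqrt (c ψ ψ))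
    (ε : ℝ) (hε : ε ∈ Set.Ioo (0 : ℝ) 1)
    -- (p,q) ∈ G × A is the solution of the AP formulation
    (p q : V) (hpG : apar p p = 0)
    (hqA : ∀ ψ : V, apar ψ ψ = 0 → c q ψ = 0)
    (hAP1 : ∀ η : V, apar η η = 0 → aperp p η + aperp q η = ell η)
    (hAP2 : ∀ ξ : V, (∀ ψ : V, apar ψ ψ = 0 → c ξ ψ = 0) →
      apar q ξ + ε * aperp q ξ + ε * aperp p ξ = ε * ell ξ)
    -- φ⁰ ∈ G is the unique solution of the Limit problem (L)
    (φ₀ : V) (hφ₀G : apar φ₀ φ₀ = 0)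
    (hφ₀ : ∀ ψ : V, apar ψ ψ = 0 → aperp φ₀ ψ = ell ψ)
    (hφ₀uniq : ∀ φ' : V, apar φ' φ' = 0 →
      (∀ ψ : V, apar ψ ψ = 0 → aperp φ' ψ = ell ψ) → φ' = φ₀) :
    (1 / (2 * ε)) * apar (p + q - φ₀) (p + q - φ₀)
        + aperp (p + q - φ₀) (p + q - φ₀)
      ≤ ε * (CW ^ 2 * F₀ ^ 2) / 2 - aperp φ₀ q := by
  obtain ⟨hε0, -⟩ := hε
  have hp := hapar.apply_eq_zero hpG
  have h0 := hapar.apply_eq_zero hφ₀G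
  have hrG : apar (p - φ₀) (p - φ₀) = 0 := by
    simp [hp, h0]
  have e1 := hAP1 _ hrG
  have e2 := hφ₀ _ hrG
  have e3 := hAP2 q hqA
  have epar : apar (p + q - φ₀) (p + q - φ₀) = apar q q := by
    simp [hp, h0, hapar.1 q p, hapar.1 q φ₀]
  have eperp : aperp (p + q - φ₀) (p + q - φ₀) = ell q - apar q q / ε - aperp φ₀ q := by
    have hq : aperp q q + aperp p q = ell q - apar q q / ε := by
      field_simp
      linarith
    simp only [map_add, map_sub, LinearMap.add_apply, LinearMap.sub_apply] at e1 e2 ⊢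
    linarith
  have hS := hapar.2.1 q
  have hlq : ell q ≤ F₀ * (CW * √(apar q q)) := by
    refine (le_abs_self _).trans ((hell q).trans (mul_le_mul_of_nonneg_left ?_ hF₀))
    refine (Real.sqrt_le_sqrt (hPW q hqA)).trans_eq ?_
    rw [Real.sqrt_mul (sq_nonneg CW), Real.sqrt_sq hCW.le]
  have hyoung : F₀ * (CW * √(apar q q)) ≤ ε * (CW ^ 2 * F₀ ^ 2) / 2 + apar q q / (2 * ε) := by
    have hsq := Real.sq_sqrt hS
    have hid : ε * (CW ^ 2 * F₀ ^ 2) / 2 + √(apar q q) ^ 2 / (2 * ε) - F₀ * (CW * √(apar q q))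
        = (ε * CW * F₀ - √(apar q q)) ^ 2 / (2 * ε) := by
      field_simp
      ring
    have hnn : 0 ≤ (ε * CW * F₀ - √(apar q q)) ^ 2 / (2 * ε) := by positivity
    rw [hsq] at hid
    linarith
  have hhalf : 1 / (2 * ε) * apar q q - apar q q / ε = -(apar q q / (2 * ε)) := by
    field_simp
    ring
  rw [epar, eperp]
  linarith
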